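/- arXiv:1910.09500 — 2 statements merged into one kernel-verified Lean document; each statement's English description precedes it below -/
import Mathlib

section
/- Let λ : ℤ₊ → ℝ satisfy (UB) and let N ≥ 1. For all t ≥ 0, (y,x) ∈ W^{N,N+1} and y' ∈ W^N: Σ_{x' ∈ ℤ₊^{N+1} : (y',x') ∈ W^{N,N+1}} U_t^{N,N+1}[(y,x),(y',x')] = det( e^{tL}(y_i, y'_j) )_{i,j=1}^N, the series converging absolutely. (Equivalently, the projection of U_t^{N,N+1} onto the y-coordinates is the Karlin–McGregor semigroup: Π P_t^N = U_t^{N,N+1} Π.) -/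
open Complex MeasureTheory Finset
open scoped Real ComplexOrder

/-- ψ_x(w) = ∏_{k=0}^{x} λ(k)/(λ(k)−w). -/
noncomputable def psiF (lam : ℕ → ℝ) (x : ℕ) (w : ℂ) : ℂ :=
  ∏ k ∈ Finset.range (x + 1), (lam k : ℂ) / ((lam k : ℂ) - w)

/-- p_x(w) = ∏_{k=0}^{x−1} (λ(k)−w)/λ(k). -/
noncomputable def pF (lam : ℕ → ℝ) (x : ℕ) (w : ℂ) : ℂ :=
  ∏ k ∈ Finset.range x, (((lam k : ℂ) - w) / (lam k : ℂ))

/-- e^{tL}(x,y) := −(1/λ(y))·(1/(2πi)) ∮_{|w|=R} ψ_y(w) p_x(w) e^{−tw} dw,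
the contour being the counterclockwise circle of radius R centred at 0. -/
noncomputable def eL (lam : ℕ → ℝ) (R t : ℝ) (x y : ℕ) : ℂ :=
  -(1 / (lam y : ℂ)) * ((2 * (Real.pi : ℂ) * Complex.I)⁻¹ *
    ∮ w in C(0, R), psiF lam y w * pF lam x w * Complex.exp (-(t : ℂ) * w))

/-- y ≺ x : interlacing, x_1 ≤ y_1 < x_2 ≤ y_2 < ⋯ ≤ y_N < x_{N+1}.
(Membership of (y,x) in W^{N,N+1} is exactly this condition.) -/
def Interlace {N : ℕ} (y : Fin N → ℕ) (x : Fin (N + 1) → ℕ) : Prop :=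
  ∀ i : Fin N, x i.castSucc ≤ y i ∧ y i < x i.succ

instance {N : ℕ} (y : Fin N → ℕ) (x : Fin (N + 1) → ℕ) : Decidable (Interlace y x) :=
  inferInstanceAs (Decidable (∀ i : Fin N, x i.castSucc ≤ y i ∧ y i < x i.succ))

/-- The two-level Karlin–McGregor block determinant kernel
U_t^{N,N+1}[(y,x),(y',x')] = det [[A, B],[C, D]] with
A_{ij} = e^{tL}(x_i,x'_j), B_{ij} = λ(y'_j)⁻¹ (Σ_{z=0}^{y'_j} e^{tL}(x_i,z) − 1(j ≥ i)),
C_{ij} = λ(y_i)(e^{tL}(y_i,x'_j) − e^{tL}(y_i+1,x'_j)), D_{ij} = e^{tL}(y_i,y'_j). -/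
noncomputable def Ut (lam : ℕ → ℝ) (R t : ℝ) (N : ℕ)
    (y : Fin N → ℕ) (x : Fin (N + 1) → ℕ)
    (y' : Fin N → ℕ) (x' : Fin (N + 1) → ℕ) : ℂ :=
  (Matrix.fromBlocks
    (Matrix.of fun i j => eL lam R t (x i) (x' j))
    (Matrix.of fun (i : Fin (N + 1)) (j : Fin N) =>
      (1 / (lam (y' j) : ℂ)) *
        ((∑ z ∈ Finset.range (y' j + 1), eL lam R t (x i) z)
          - if (i : ℕ) ≤ (j : ℕ) then 1 else 0))
    (Matrix.of fun (i : Fin N) (j : Fin (N + 1)) =>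
      (lam (y i) : ℂ) * (eL lam R t (y i) (x' j) - eL lam R t (y i + 1) (x' j)))
    (Matrix.of fun i j => eL lam R t (y i) (y' j))).det

/-!
The differences of `ψ` satisfy `ψ_{n-1} - ψ_n = -w ψ_n / λ(n)`, so sums of the kernel `e^{tL}(x, ·)`
over its second argument telescope under the contour integral. Pushing the contour out to
`|w| = 3R`, where `ψ_n` decays geometrically, leaves the Cauchy integral at `0`: all row sums are
one. Since also `λ(x) (p_x - p_{x+1}) = w p_x`, the partial sums `S(x, n)` of the rows obey the
duality `λ(x) (S(x, n) - S(x + 1, n)) = λ(n) e^{tL}(x, n)`.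

Given `y'`, interlacing constrains each `x'_j` separately to the slot `(y'_{j-1}, y'_j]`, and `x'_j`
occurs in column `j` of the determinant only. The sum over `x'` is therefore taken column by column.
It replaces `A` by `1 + B E` and, by duality, `C` by `D E`, for one bidiagonal matrix `E`; column
operations then leave `det [[1, B], [0, D]] = det D`.
-/

/-- `∏_{k<n} a(k)/(a(k)−w)` for complex rates `a`, indexed so that `psiProd` at `0` is the empty
product: `ψ_x` is `psiProd` at `x + 1`. -/
noncomputable def psiProd (a : ℕ → ℂ) (n : ℕ) (w : ℂ) : ℂ :=
  ∏ k ∈ Finset.range n, a k / (a k - w)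

/-- The contour integral `(2πi)⁻¹ ∮_{|w|=R} psiProd a n w * g w dw`, whose differences in `n` turn
sums of the kernel `e^{tL}` into telescoping sums. -/
noncomputable def psiIntegral (a : ℕ → ℂ) (R : ℝ) (g : ℂ → ℂ) (n : ℕ) : ℂ :=
  (2 * (Real.pi : ℂ) * Complex.I)⁻¹ * ∮ w in C(0, R), psiProd a n w * g w

section ContourIntegral

variable {a : ℕ → ℂ} {R : ℝ} {g h : ℂ → ℂ} {w : ℂ}

lemma psiProd_sub_succ {n : ℕ} (ha : a n ≠ 0) (hw : w ≠ a n) :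
    psiProd a n w - psiProd a (n + 1) w = -(a n)⁻¹ * (psiProd a (n + 1) w * w) := by
  have hsub : a n - w ≠ 0 := sub_ne_zero.2 hw.symm
  rw [psiProd, psiProd, Finset.prod_range_succ]
  field_simp
  ring

lemma differentiableAt_psiProd (hw : ∀ k, w ≠ a k) (n : ℕ) :
    DifferentiableAt ℂ (psiProd a n) w :=
  DifferentiableAt.fun_finsetProd fun k _ =>
    (differentiableAt_const _).div ((differentiableAt_const _).sub differentiableAt_id)
      (sub_ne_zero.2 (hw k).symm)

lemma norm_psiProd_le (hw : ∀ k, 3 * ‖a k‖ ≤ ‖w‖) (n : ℕ) : ‖psiProd a n w‖ ≤ (1 / 2) ^ n := by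
  rw [psiProd, norm_prod]
  refine (Finset.prod_le_prod (fun k _ => norm_nonneg _) (g := fun _ => (1 / 2 : ℝ))
    fun k _ => ?_).trans_eq (by simp)
  have hdist : ‖w‖ - ‖a k‖ ≤ ‖a k - w‖ := norm_sub_rev w (a k) ▸ norm_sub_norm_le _ _
  rw [norm_div]
  exact div_le_of_le_mul₀ (norm_nonneg _) (by norm_num) (by linarith [hw k])

lemma ne_of_forall_norm_lt (hR : ∀ k, ‖a k‖ < R) (hw : R ≤ ‖w‖) (k : ℕ) : w ≠ a k := by
  rintro rfl
  exact (hR k).not_ge hw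

lemma circleIntegrable_psiProd_mul (hR : ∀ k, ‖a k‖ < R)
    (hg : ContinuousOn g (Metric.sphere 0 R)) (n : ℕ) :
    CircleIntegrable (fun w => psiProd a n w * g w) 0 R := by
  refine ContinuousOn.circleIntegrable ((norm_nonneg _).trans (hR 0).le) (.mul ?_ hg)
  exact fun w hw => (differentiableAt_psiProd (ne_of_forall_norm_lt hR
    (mem_sphere_zero_iff_norm.1 hw).ge) n).continuousAt.continuousWithinAt

lemma psiIntegral_congr (hR : 0 ≤ R) (hgh : Set.EqOn g h (Metric.sphere 0 R)) (n : ℕ) :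
    psiIntegral a R g n = psiIntegral a R h n :=
  congrArg ((2 * (Real.pi : ℂ) * Complex.I)⁻¹ * ·)
    (circleIntegral.integral_congr hR fun w hw => congrArg (psiProd a n w * ·) (hgh hw))

lemma mul_psiIntegral_sub (hR : ∀ k, ‖a k‖ < R) (hg : ContinuousOn g (Metric.sphere 0 R))
    (hh : ContinuousOn h (Metric.sphere 0 R)) (c : ℂ) (n : ℕ) :
    c * (psiIntegral a R g n - psiIntegral a R h n)
      = psiIntegral a R (fun w => c * (g w - h w)) n := by
  rw [psiIntegral, psiIntegral, psiIntegral, ← mul_sub,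
    ← circleIntegral.integral_sub (circleIntegrable_psiProd_mul hR hg n)
      (circleIntegrable_psiProd_mul hR hh n),
    mul_left_comm, ← circleIntegral.integral_const_mul c]
  simp only [mul_sub, mul_left_comm c]

lemma psiIntegral_sub_succ (ha : ∀ k, a k ≠ 0) (hR : ∀ k, ‖a k‖ < R)
    (hg : ContinuousOn g (Metric.sphere 0 R)) (n : ℕ) :
    psiIntegral a R g n - psiIntegral a R g (n + 1)
      = -(a n)⁻¹ * psiIntegral a R (fun w => w * g w) (n + 1) := by
  rw [psiIntegral, psiIntegral, psiIntegral, ← mul_sub,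
    ← circleIntegral.integral_sub (circleIntegrable_psiProd_mul hR hg n)
      (circleIntegrable_psiProd_mul hR hg (n + 1)),
    mul_left_comm, ← circleIntegral.integral_const_mul (-(a n)⁻¹)]
  refine congrArg _ (circleIntegral.integral_congr ((norm_nonneg _).trans (hR 0).le)
    fun w hw => ?_)
  have hw' : w ≠ a n := ne_of_forall_norm_lt hR (mem_sphere_zero_iff_norm.1 hw).ge n
  rw [← sub_mul, psiProd_sub_succ (ha n) hw', mul_assoc, mul_assoc]

lemma psiIntegral_eq_of_radius_le (hR : ∀ k, ‖a k‖ < R)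
    (hg : ∀ w, R ≤ ‖w‖ → DifferentiableAt ℂ g w) {R' : ℝ} (hRR' : R ≤ R') (n : ℕ) :
    psiIntegral a R' g n = psiIntegral a R g n := by
  have hdiff : ∀ w, R ≤ ‖w‖ → DifferentiableAt ℂ (fun w => psiProd a n w * g w) w :=
    fun w hw => (differentiableAt_psiProd (ne_of_forall_norm_lt hR hw) n).mul (hg w hw)
  rw [psiIntegral, psiIntegral,
    Complex.circleIntegral_eq_of_differentiable_on_annulus_off_countable
      ((norm_nonneg _).trans_lt (hR 0)) hRR' Set.countable_empty]
  · exact fun w hw => (hdiff w (by simpa using hw.2)).continuousAt.continuousWithinAt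
  · exact fun w hw => hdiff w (le_of_lt (by simpa using hw.1.2))

lemma summable_psiIntegral (hR : ∀ k, ‖a k‖ < R)
    (hg : ∀ w, R ≤ ‖w‖ → DifferentiableAt ℂ g w) : Summable (psiIntegral a R g) := by
  have hR0 : 0 < R := (norm_nonneg _).trans_lt (hR 0)
  -- On `|w| = 3R` every factor of `psiProd` is at most `1/2` in norm.
  obtain ⟨C, hC⟩ := (isCompact_sphere (0 : ℂ) (3 * R)).exists_bound_of_continuousOn (f := g)
    fun w hw => (hg w (by rw [mem_sphere_zero_iff_norm.1 hw]; linarith)).continuousAt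
      |>.continuousWithinAt
  have hbound : ∀ n, ‖psiIntegral a R g n‖ ≤ 3 * R * ((1 / 2) ^ n * C) := by
    intro n
    rw [← psiIntegral_eq_of_radius_le hR hg (by linarith : R ≤ 3 * R)]
    refine circleIntegral.norm_two_pi_i_inv_smul_integral_le_of_norm_le_const (by positivity)
      fun w hw => ?_
    have hw' : ∀ k, 3 * ‖a k‖ ≤ ‖w‖ := fun k => by
      rw [mem_sphere_zero_iff_norm.1 hw]
      linarith [hR k]
    rw [norm_mul]
    exact mul_le_mul (norm_psiProd_le hw' n) (hC w hw) (norm_nonneg _) (by positivity)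
  exact .of_norm_bounded ((summable_geometric_two.mul_right C).mul_left (3 * R)) hbound

lemma psiIntegral_zero_of_differentiable (hR : 0 ≤ R) (hg : Differentiable ℂ g) :
    psiIntegral a R g 0 = 0 := by
  simp only [psiIntegral, psiProd, Finset.range_zero, Finset.prod_empty, one_mul]
  rw [Complex.circleIntegral_eq_zero_of_differentiable_on_off_countable hR Set.countable_empty
    hg.continuous.continuousOn fun w _ => hg w, mul_zero]

lemma psiIntegral_inv_mul_zero (hR : 0 < R) (hg : Differentiable ℂ g) :
    psiIntegral a R (fun w => w⁻¹ * g w) 0 = g 0 := by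
  simpa [psiIntegral, psiProd] using hg.diffContOnCl
    |>.two_pi_i_inv_smul_circleIntegral_sub_inv_smul (Metric.mem_ball_self (x := (0 : ℂ)) hR)

lemma hasSum_psiIntegral_succ (ha : ∀ k, a k ≠ 0) (hR : ∀ k, ‖a k‖ < R)
    (hg : Differentiable ℂ g) :
    HasSum (fun n => -(a n)⁻¹ * psiIntegral a R g (n + 1)) (g 0) := by
  have hR0 : 0 < R := (norm_nonneg _).trans_lt (hR 0)
  have hne : ∀ w : ℂ, R ≤ ‖w‖ → w ≠ 0 := fun w hw => norm_pos_iff.1 (hR0.trans_le hw)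
  have hdiff : ∀ w, R ≤ ‖w‖ → DifferentiableAt ℂ (fun w => w⁻¹ * g w) w :=
    fun w hw => (differentiableAt_inv (hne w hw)).mul (hg w)
  have hstep : ∀ n, psiIntegral a R (fun w => w⁻¹ * g w) n
      - psiIntegral a R (fun w => w⁻¹ * g w) (n + 1) = -(a n)⁻¹ * psiIntegral a R g (n + 1) := by
    intro n
    rw [psiIntegral_sub_succ ha hR fun w hw =>
      (hdiff w (mem_sphere_zero_iff_norm.1 hw).ge).continuousAt.continuousWithinAt]
    exact congrArg _ (psiIntegral_congr hR0.le (fun w hw =>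
      mul_inv_cancel_left₀ (hne w (mem_sphere_zero_iff_norm.1 hw).ge) _) (n + 1))
  have hsum := (summable_psiIntegral hR hdiff).hasSum
  have htel := hsum.sub ((hasSum_nat_add_iff' 1).2 hsum)
  simpa only [hstep, Finset.sum_range_one, sub_sub_cancel, psiIntegral_inv_mul_zero hR0 hg]
    using htel

lemma sum_range_psiIntegral_id_mul (ha : ∀ k, a k ≠ 0) (hR : ∀ k, ‖a k‖ < R)
    (hg : Differentiable ℂ g) (n : ℕ) :
    ∑ z ∈ Finset.range n, -(a z)⁻¹ * psiIntegral a R (fun w => w * g w) (z + 1)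
      = -psiIntegral a R g n := by
  simp only [← psiIntegral_sub_succ ha hR hg.continuous.continuousOn, Finset.sum_range_sub',
    psiIntegral_zero_of_differentiable ((norm_nonneg _).trans (hR 0).le) hg, zero_sub]

end ContourIntegral

section Kernel

variable {lam : ℕ → ℝ} {R : ℝ}

lemma eL_eq_psiIntegral (lam : ℕ → ℝ) (R t : ℝ) (x n : ℕ) :
    eL lam R t x n = -(lam n : ℂ)⁻¹ * psiIntegral (fun k => (lam k : ℂ)) R
      (fun w => pF lam x w * Complex.exp (-(t : ℂ) * w)) (n + 1) := by
  simp only [eL, psiIntegral, mul_assoc, one_div]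
  rfl

lemma differentiable_pF_mul_exp (lam : ℕ → ℝ) (t : ℝ) (x : ℕ) :
    Differentiable ℂ fun w => pF lam x w * Complex.exp (-(t : ℂ) * w) := by
  unfold pF
  fun_prop

lemma mul_pF_sub_succ {x : ℕ} (hx : lam x ≠ 0) (w : ℂ) :
    (lam x : ℂ) * (pF lam x w - pF lam (x + 1) w) = w * pF lam x w := by
  have hx' : (lam x : ℂ) ≠ 0 := Complex.ofReal_ne_zero.2 hx
  rw [pF, pF, Finset.prod_range_succ]
  field_simp
  ring

lemma hasSum_eL (hlam : ∀ k, lam k ≠ 0) (hR : ∀ k, |lam k| < R) (t : ℝ) (x : ℕ) :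
    HasSum (eL lam R t x) 1 := by
  have hone : pF lam x 0 * Complex.exp (-(t : ℂ) * 0) = 1 := by simp [pF, hlam]
  rw [funext (eL_eq_psiIntegral lam R t x), ← hone]
  exact hasSum_psiIntegral_succ (fun k => Complex.ofReal_ne_zero.2 (hlam k))
    (by simpa using hR) (differentiable_pF_mul_exp lam t x)

lemma mul_eL_sub_succ (hlam : ∀ k, lam k ≠ 0) (hR : ∀ k, |lam k| < R) (t : ℝ) (x n : ℕ) :
    (lam x : ℂ) * (eL lam R t x n - eL lam R t (x + 1) n)
      = -(lam n : ℂ)⁻¹ * psiIntegral (fun k => (lam k : ℂ)) R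
        (fun w => w * (pF lam x w * Complex.exp (-(t : ℂ) * w))) (n + 1) := by
  rw [eL_eq_psiIntegral, eL_eq_psiIntegral, ← mul_sub, mul_left_comm,
    mul_psiIntegral_sub (by simpa using hR)
      (differentiable_pF_mul_exp lam t x).continuous.continuousOn
      (differentiable_pF_mul_exp lam t (x + 1)).continuous.continuousOn]
  simp only [← sub_mul, ← mul_assoc, mul_pF_sub_succ (hlam x)]

lemma sum_range_mul_eL_sub_succ (hlam : ∀ k, lam k ≠ 0) (hR : ∀ k, |lam k| < R) (t : ℝ)
    (x n : ℕ) :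
    ∑ z ∈ Finset.range (n + 1), (lam x : ℂ) * (eL lam R t x z - eL lam R t (x + 1) z)
      = lam n * eL lam R t x n := by
  have hlam' : ∀ k, (lam k : ℂ) ≠ 0 := fun k => Complex.ofReal_ne_zero.2 (hlam k)
  simp only [mul_eL_sub_succ hlam hR]
  rw [sum_range_psiIntegral_id_mul hlam' (by simpa using hR) (differentiable_pF_mul_exp lam t x),
    eL_eq_psiIntegral, neg_mul, mul_neg, mul_inv_cancel_left₀ (hlam' n)]

end Kernel

section Determinants

variable {m n R : Type*} [Fintype m] [Fintype n] [DecidableEq m] [DecidableEq n]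

lemma det_fromBlocks_add_mul_right [CommRing R] (A : Matrix m m R) (B : Matrix m n R)
    (C : Matrix n m R) (D : Matrix n n R) (E : Matrix n m R) :
    (Matrix.fromBlocks (A + B * E) B (C + D * E) D).det = (Matrix.fromBlocks A B C D).det := by
  have hmul : Matrix.fromBlocks (A + B * E) B (C + D * E) D
      = Matrix.fromBlocks A B C D * Matrix.fromBlocks 1 0 E 1 := by
    simp [Matrix.fromBlocks_multiply]
  rw [hmul, Matrix.det_mul, Matrix.det_fromBlocks_zero₁₂, Matrix.det_one, Matrix.det_one, mul_one,
    mul_one]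

variable {κ 𝕜 : Type*} [RCLike 𝕜]

lemma hasSum_mul_prod {ι : Type*} {f : ι → 𝕜} {g : κ → 𝕜} {a b : 𝕜} (hf : HasSum f a)
    (hg : HasSum g b) : HasSum (fun p : ι × κ => f p.1 * g p.2) (a * b) :=
  hf.mul hg (summable_mul_of_summable_norm hf.summable.norm hg.summable.norm)

lemma hasSum_fin_pi_prod {d : ℕ} {f : Fin d → κ → 𝕜} {a : Fin d → 𝕜}
    (h : ∀ j, HasSum (f j) (a j)) : HasSum (fun x : Fin d → κ => ∏ j, f j (x j)) (∏ j, a j) := by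
  induction d with
  | zero => simp
  | succ d ih =>
    rw [← (Fin.consEquiv fun _ => κ).hasSum_iff, Fin.prod_univ_succ]
    refine (hasSum_mul_prod (h 0) (ih fun j => h j.succ)).congr_fun fun p => ?_
    simp [Fin.prod_univ_succ, Fin.consEquiv]

lemma hasSum_pi_prod {ι : Type*} [Fintype ι] {f : ι → κ → 𝕜} {a : ι → 𝕜}
    (h : ∀ j, HasSum (f j) (a j)) : HasSum (fun x : ι → κ => ∏ j, f j (x j)) (∏ j, a j) := by
  let e := (Fintype.equivFin ι).symm
  rw [← (e.arrowCongr (Equiv.refl κ)).hasSum_iff, ← e.prod_comp]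
  refine (hasSum_fin_pi_prod fun j => h (e j)).congr_fun fun x => ?_
  simp [← e.prod_comp]

lemma hasSum_det_fromBlocks {f : m → m → κ → 𝕜} {g : n → m → κ → 𝕜} {A : Matrix m m 𝕜}
    {C : Matrix n m 𝕜} (hf : ∀ i j, HasSum (f i j) (A i j)) (hg : ∀ i j, HasSum (g i j) (C i j))
    (B : Matrix m n 𝕜) (D : Matrix n n 𝕜) :
    HasSum (fun x : m → κ => (Matrix.fromBlocks (Matrix.of fun i j => f i j (x j)) B
      (Matrix.of fun i j => g i j (x j)) D).det) (Matrix.fromBlocks A B C D).det := by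
  have hfg : ∀ i j, HasSum (Sum.elim f g i j) (Matrix.fromBlocks A B C D i (.inl j)) :=
    Sum.rec hf hg
  have hinl : ∀ (x : m → κ) i j, Matrix.fromBlocks (Matrix.of fun i j => f i j (x j)) B
      (Matrix.of fun i j => g i j (x j)) D i (.inl j) = Sum.elim f g i j (x j) := by
    rintro x (i | i) j <;> rfl
  have hinr : ∀ (x : m → κ) i j, Matrix.fromBlocks (Matrix.of fun i j => f i j (x j)) B
      (Matrix.of fun i j => g i j (x j)) D i (.inr j) = Matrix.fromBlocks A B C D i (.inr j) := by
    rintro x (i | i) j <;> rfl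
  simp only [Matrix.det_apply', Fintype.prod_sum_type, hinl, hinr]
  exact hasSum_sum fun σ _ =>
    ((hasSum_pi_prod fun j => hfg (σ (.inl j)) j).mul_right _).mul_left _

end Determinants

section Interlacing

variable {N : ℕ}

/-- The values that the interlacing pattern allows at position `j` above `y`: those in
`(y_{j-1}, y_j]`, with no lower bound at the first position and no upper bound at the last. -/
def interlaceSlot {α : Type*} [Preorder α] (y : Fin N → α) (j : Fin (N + 1)) : Set α :=
  {z | (∀ i : Fin N, i.castSucc = j → z ≤ y i) ∧ ∀ i : Fin N, i.succ = j → y i < z}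

/-- The differences `v_j - v_{j-1}` for `0 ≤ j ≤ N`, with `v_N := a` and `v_{-1} := 0`. For partial
sums `v_j` of a series with sum `a` these are its sums over the slots of an interlacing pattern. -/
def slotDiff {M : Type*} [AddGroup M] (v : Fin N → M) (a : M) (j : Fin (N + 1)) : M :=
  (Fin.snoc v a : Fin (N + 1) → M) j - (Fin.cons 0 v : Fin (N + 1) → M) j

lemma interlace_iff_forall_mem_interlaceSlot {y : Fin N → ℕ} {x : Fin (N + 1) → ℕ} :
    Interlace y x ↔ ∀ j, x j ∈ interlaceSlot y j := by
  simp only [Interlace, interlaceSlot, Set.mem_ofPred_eq]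
  constructor
  · exact fun h j => ⟨by rintro i rfl; exact (h i).1, by rintro i rfl; exact (h i).2⟩
  · exact fun h i => ⟨(h i.castSucc).1 i rfl, (h i.succ).2 i rfl⟩

lemma slotDiff_add {M : Type*} [AddCommGroup M] (u v : Fin N → M) (a b : M) :
    slotDiff (u + v) (a + b) = slotDiff u a + slotDiff v b := by
  ext j
  have hsnoc : (Fin.snoc (u + v) (a + b) : Fin (N + 1) → M) j
      = (Fin.snoc u a : Fin (N + 1) → M) j + (Fin.snoc v b : Fin (N + 1) → M) j := by
    induction j using Fin.lastCases <;> simp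
  have hcons : (Fin.cons 0 (u + v) : Fin (N + 1) → M) j
      = (Fin.cons 0 u : Fin (N + 1) → M) j + (Fin.cons 0 v : Fin (N + 1) → M) j := by
    induction j using Fin.cases <;> simp
  rw [Pi.add_apply, slotDiff, slotDiff, slotDiff, hsnoc, hcons, add_sub_add_comm]

lemma vecMul_slotDiff_single {R : Type*} [Ring R] (v w : Fin N → R) :
    Matrix.vecMul v (Matrix.of fun k => slotDiff (Pi.single k (w k)) 0) = slotDiff (v * w) 0 := by
  ext j
  have hsnoc : ∑ k, v k * (Fin.snoc (Pi.single k (w k)) 0 : Fin (N + 1) → R) j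
      = (Fin.snoc (v * w) 0 : Fin (N + 1) → R) j := by
    induction j using Fin.lastCases <;> simp [Pi.single_apply]
  have hcons : ∑ k, v k * (Fin.cons 0 (Pi.single k (w k)) : Fin (N + 1) → R) j
      = (Fin.cons 0 (v * w) : Fin (N + 1) → R) j := by
    induction j using Fin.cases <;> simp [Pi.single_apply]
  simp only [Matrix.vecMul, dotProduct, Matrix.of_apply, slotDiff, mul_sub,
    Finset.sum_sub_distrib, hsnoc, hcons]

lemma indicator_interlaceSlot_apply {α M : Type*} [LinearOrder α] [AddGroup M] {y : Fin N → α}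
    (hy : Monotone y) (f : α → M) (j : Fin (N + 1)) (z : α) :
    (interlaceSlot y j).indicator f z
      = slotDiff (fun k => if z ≤ y k then f z else 0) (f z) j := by
  classical
  have hsnoc : (Fin.snoc (fun k => if z ≤ y k then f z else 0) (f z) : Fin (N + 1) → M) j
      = if ∀ i : Fin N, i.castSucc = j → z ≤ y i then f z else 0 := by
    induction j using Fin.lastCases <;> simp [Fin.castSucc_ne_last]
  have hcons : (Fin.cons 0 (fun k => if z ≤ y k then f z else 0) : Fin (N + 1) → M) j
      = if ∀ i : Fin N, i.succ = j → y i < z then 0 else f z := by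
    induction j using Fin.cases <;> simp [Fin.succ_ne_zero, ← not_lt, ite_not]
  have hupper : (¬ ∀ i : Fin N, i.succ = j → y i < z) →
      ∀ i : Fin N, i.castSucc = j → z ≤ y i := by
    intro h k hk
    push Not at h
    obtain ⟨i, rfl, hz⟩ := h
    have hik : (k : ℕ) = i + 1 := congrArg Fin.val hk
    exact hz.trans (hy (Fin.le_def.2 (by omega)))
  rw [slotDiff, hsnoc, hcons, Set.indicator_apply]
  by_cases hlower : ∀ i : Fin N, i.succ = j → y i < z
  · simp only [interlaceSlot, Set.mem_ofPred_eq, and_iff_left hlower, if_pos hlower, sub_zero]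
  · simp only [interlaceSlot, Set.mem_ofPred_eq, hlower, and_false, if_false,
      if_pos (hupper hlower), sub_self]

lemma mem_interlaceSlot_castSucc {i j : Fin (N + 1)} :
    i ∈ interlaceSlot Fin.castSucc j ↔ i = j := by
  constructor
  · rintro ⟨hupper, hlower⟩
    refine le_antisymm ?_ ?_
    · induction j using Fin.lastCases with
      | last => exact Fin.le_last i
      | cast k => exact hupper k rfl
    · induction j using Fin.cases with
      | zero => exact Fin.zero_le i
      | succ k => exact Fin.castSucc_lt_iff_succ_le.1 (hlower k rfl)
  · rintro rfl
    exact ⟨fun k hk => hk.ge, fun k hk => hk ▸ Fin.castSucc_lt_succ⟩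

lemma one_apply_eq_slotDiff {R : Type*} [Ring R] (i : Fin (N + 1)) :
    (1 : Matrix (Fin (N + 1)) (Fin (N + 1)) R) i
      = slotDiff (fun k : Fin N => if (i : ℕ) ≤ k then 1 else 0) 1 := by
  classical
  ext j
  have hind := indicator_interlaceSlot_apply Fin.strictMono_castSucc.monotone
    (1 : Fin (N + 1) → R) j i
  rw [Set.indicator_apply] at hind
  simpa only [Matrix.one_apply, mem_interlaceSlot_castSucc, Pi.one_apply, Fin.le_def,
    Fin.val_castSucc] using hind

lemma hasSum_ite_le {M : Type*} [AddCommMonoid M] [TopologicalSpace M] (f : ℕ → M) (n : ℕ) :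
    HasSum (fun z => if z ≤ n then f z else 0) (∑ z ∈ Finset.range (n + 1), f z) := by
  rw [Finset.sum_congr rfl fun z hz =>
    (if_pos (Nat.lt_succ_iff.1 (Finset.mem_range.1 hz)) : (if z ≤ n then f z else 0) = f z).symm]
  exact hasSum_sum_of_ne_finset_zero fun z hz =>
    if_neg fun hle => hz (Finset.mem_range.2 (Nat.lt_succ_iff.2 hle))

lemma hasSum_indicator_interlaceSlot {M : Type*} [AddCommGroup M] [TopologicalSpace M]
    [IsTopologicalAddGroup M] {y : Fin N → ℕ} (hy : Monotone y) {f : ℕ → M} {a : M}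
    (hf : HasSum f a) (j : Fin (N + 1)) :
    HasSum ((interlaceSlot y j).indicator f)
      (slotDiff (fun k => ∑ z ∈ Finset.range (y k + 1), f z) a j) := by
  rw [funext (indicator_interlaceSlot_apply hy f j)]
  refine HasSum.sub ?_ ?_
  · induction j using Fin.lastCases with
    | last => simpa using hf
    | cast k => simpa using hasSum_ite_le f (y k)
  · induction j using Fin.cases with
    | zero => simp
    | succ k => simpa using hasSum_ite_le f (y k)

variable {𝕜 : Type*} [RCLike 𝕜]

lemma hasSum_det_fromBlocks_interlace {n : Type*} [Fintype n] [DecidableEq n] {y : Fin N → ℕ}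
    {f : Fin (N + 1) → ℕ → 𝕜} {g : n → ℕ → 𝕜} {A : Matrix (Fin (N + 1)) (Fin (N + 1)) 𝕜}
    {C : Matrix n (Fin (N + 1)) 𝕜}
    (hf : ∀ i j, HasSum ((interlaceSlot y j).indicator (f i)) (A i j))
    (hg : ∀ i j, HasSum ((interlaceSlot y j).indicator (g i)) (C i j))
    (B : Matrix (Fin (N + 1)) n 𝕜) (D : Matrix n n 𝕜) :
    HasSum (fun x : { x : Fin (N + 1) → ℕ // Interlace y x } =>
        (Matrix.fromBlocks (Matrix.of fun i j => f i (x.1 j)) B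
          (Matrix.of fun i j => g i (x.1 j)) D).det)
      (Matrix.fromBlocks A B C D).det := by
  let F : (Fin (N + 1) → ℕ) → 𝕜 := fun x => (Matrix.fromBlocks (Matrix.of fun i j => f i (x j)) B
    (Matrix.of fun i j => g i (x j)) D).det
  refine (hasSum_subtype_iff_indicator (f := F) (s := {x | Interlace y x})).2 ?_
  refine (hasSum_det_fromBlocks hf hg B D).congr_fun fun x => ?_
  by_cases hx : Interlace y x
  · rw [Set.indicator_of_mem (Set.mem_ofPred.2 hx)]
    simp only [F, Set.indicator_of_mem (interlace_iff_forall_mem_interlaceSlot.1 hx _)]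
  · obtain ⟨j, hj⟩ := not_forall.1 (mt interlace_iff_forall_mem_interlaceSlot.2 hx)
    rw [Set.indicator_of_notMem (mt Set.mem_ofPred.1 hx)]
    exact (Matrix.det_eq_zero_of_column_eq_zero (Sum.inl j) (by simp [hj])).symm

theorem hasSum_det_interlace_of_duality {P : ℕ → ℕ → 𝕜} {c : ℕ → 𝕜} (hc : ∀ n, c n ≠ 0)
    (hsum : ∀ x, HasSum (P x) 1)
    (hdual : ∀ x n, ∑ z ∈ Finset.range (n + 1), c x * (P x z - P (x + 1) z) = c n * P x n)
    (y : Fin N → ℕ) (x : Fin (N + 1) → ℕ) {y' : Fin N → ℕ} (hy' : Monotone y') :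
    HasSum (fun x' : { x' : Fin (N + 1) → ℕ // Interlace y' x' } =>
        (Matrix.fromBlocks
          (Matrix.of fun i j => P (x i) (x'.1 j))
          (Matrix.of fun (i : Fin (N + 1)) (j : Fin N) => 1 / c (y' j) *
            (∑ z ∈ Finset.range (y' j + 1), P (x i) z - if (i : ℕ) ≤ (j : ℕ) then 1 else 0))
          (Matrix.of fun (i : Fin N) (j : Fin (N + 1)) =>
            c (y i) * (P (y i) (x'.1 j) - P (y i + 1) (x'.1 j)))
          (Matrix.of fun i j => P (y i) (y' j))).det)
      (Matrix.of fun i j => P (y i) (y' j)).det := by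
  set B : Matrix (Fin (N + 1)) (Fin N) 𝕜 := Matrix.of fun i j => 1 / c (y' j) *
    (∑ z ∈ Finset.range (y' j + 1), P (x i) z - if (i : ℕ) ≤ (j : ℕ) then 1 else 0)
  set D : Matrix (Fin N) (Fin N) 𝕜 := Matrix.of fun i j => P (y i) (y' j)
  let E : Matrix (Fin N) (Fin (N + 1)) 𝕜 :=
    Matrix.of fun k => slotDiff (Pi.single k (c (y' k))) 0
  have htop : ∀ i j, HasSum ((interlaceSlot y' j).indicator (P (x i)))
      ((1 + B * E : Matrix _ _ 𝕜) i j) := by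
    intro i j
    have hsplit : (fun k => ∑ z ∈ Finset.range (y' k + 1), P (x i) z)
        = (fun k : Fin N => if (i : ℕ) ≤ k then 1 else 0) + B i * fun k => c (y' k) := by
      ext k
      simp [B, mul_right_comm, hc]
    rw [Matrix.add_apply, Matrix.mul_apply_eq_vecMul, vecMul_slotDiff_single,
      one_apply_eq_slotDiff, ← Pi.add_apply, ← slotDiff_add, ← hsplit, add_zero]
    exact hasSum_indicator_interlaceSlot hy' (hsum (x i)) j
  have hbot : ∀ i j, HasSum ((interlaceSlot y' j).indicator
      fun z => c (y i) * (P (y i) z - P (y i + 1) z)) ((0 + D * E : Matrix _ _ 𝕜) i j) := by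
    intro i j
    have hpartial : (fun k => ∑ z ∈ Finset.range (y' k + 1),
        c (y i) * (P (y i) z - P (y i + 1) z)) = D i * fun k => c (y' k) := by
      ext k
      simp only [hdual, D, Pi.mul_apply, Matrix.of_apply, mul_comm]
    have htotal : HasSum (fun z => c (y i) * (P (y i) z - P (y i + 1) z)) 0 := by
      simpa using ((hsum (y i)).sub (hsum (y i + 1))).mul_left (c (y i))
    rw [zero_add, Matrix.mul_apply_eq_vecMul, vecMul_slotDiff_single, ← hpartial]
    exact hasSum_indicator_interlaceSlot hy' htotal j
  have hdet := hasSum_det_fromBlocks_interlace htop hbot B D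
  rwa [det_fromBlocks_add_mul_right, Matrix.det_fromBlocks_zero₂₁, Matrix.det_one, one_mul] at hdet

end Interlacing

theorem stmt_5_general (lam : ℕ → ℝ) (hlam : ∀ k, lam k ≠ 0) (R : ℝ) (hR : ∀ k, |lam k| < R)
    (N : ℕ) (t : ℝ) (y : Fin N → ℕ) (x : Fin (N + 1) → ℕ) (y' : Fin N → ℕ) (hy' : Monotone y') :
    HasSum (fun x' : { x' : Fin (N + 1) → ℕ // Interlace y' x' } =>
        Ut lam R t N y x y' x'.1)
      ((Matrix.of fun i j => eL lam R t (y i) (y' j)).det) ∧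
    Summable (fun x' : { x' : Fin (N + 1) → ℕ // Interlace y' x' } =>
        ‖Ut lam R t N y x y' x'.1‖) := by
  have h := hasSum_det_interlace_of_duality (fun k => Complex.ofReal_ne_zero.2 (hlam k))
    (hasSum_eL hlam hR t) (sum_range_mul_eL_sub_succ hlam hR t) y x hy'
  exact ⟨h, h.summable.norm⟩

/-- projection onto the y-coordinates gives the Karlin–McGregor semigroup:
for all t ≥ 0, (y,x) ∈ W^{N,N+1} and y' ∈ W^N,
Σ_{x' : (y',x') ∈ W^{N,N+1}} U_t^{N,N+1}[(y,x),(y',x')] = det(e^{tL}(y_i,y'_j)),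
the series converging absolutely. -/
theorem stmt_5 (lam : ℕ → ℝ) (s M : ℝ) (hs : 0 < s)
    (hlb : ∀ x, s ≤ lam x) (hub : ∀ x, lam x ≤ M)
    (R : ℝ) (hR : M < R) (N : ℕ) (hN : 1 ≤ N) (t : ℝ) (ht : 0 ≤ t)
    (y : Fin N → ℕ) (x : Fin (N + 1) → ℕ) (hyx : Interlace y x)
    (y' : Fin N → ℕ) (hy' : StrictMono y') :
    HasSum (fun x' : { x' : Fin (N + 1) → ℕ // Interlace y' x' } =>
        Ut lam R t N y x y' x'.1)
      ((Matrix.of fun i j => eL lam R t (y i) (y' j)).det) ∧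
    Summable (fun x' : { x' : Fin (N + 1) → ℕ // Interlace y' x' } =>
        ‖Ut lam R t N y x y' x'.1‖) := by
  have hpos : ∀ k, 0 < lam k := fun k => hs.trans_le (hlb k)
  exact stmt_5_general lam (fun k => (hpos k).ne') R
    (fun k => (abs_of_pos (hpos k)).trans_lt ((hub k).trans_lt hR)) N t y x y' hy'.monotone
end

section
/- Let λ : ℤ₊ → ℝ satisfy (UB) and let N ≥ 1. Fix (y',x') ∈ W^{N,N+1}. Then: (i) at t = 0, U_0^{N,N+1}[(y,x),(y',x')] = 1( (y,x) = (y',x') ) for all (y,x) ∈ W^{N,N+1}; (ii) for every (y,x) ∈ W^{N,N+1} belonging to the interior of W^{N,N+1} (meaning that (y + e_i, x) ∈ W^{N,N+1} for every 1 ≤ i ≤ N and (y, x + e_j) ∈ W^{N,N+1} for every 1 ≤ j ≤ N+1, where e_i denotes the i-th standard unit vector), the map t ↦ U_t^{N,N+1}[(y,x),(y',x')] is differentiable on [0,∞) and satisfies the Kolmogorov backward equation (d/dt) U_t^{N,N+1}[(y,x),(y',x')] = Σ_{j=1}^{N+1} λ(x_j) ( U_t^{N,N+1}[(y, x+e_j),(y',x')]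 − U_t^{N,N+1}[(y,x),(y',x')] ) + Σ_{i=1}^{N} λ(y_i) ( U_t^{N,N+1}[(y+e_i, x),(y',x')] − U_t^{N,N+1}[(y,x),(y',x')] ); and (iii) the Dirichlet boundary condition holds: if y ∈ ℤ₊^N has y_i = y_{i+1} for some i, then U_t^{N,N+1}[(y,x),(y',x')] = 0 for all t ≥ 0 and x ∈ ℤ₊^{N+1}. -/
open Complex MeasureTheory Finset
open scoped Real ComplexOrder

/-
The one-particle kernel `e^{tL}` solves the backward equation because `p_x(w)` is an eigenfunction
of the generator; the determinant inherits the equation, since each of its rows depends on the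
position of a single particle and solves the one-particle equation. At `t = 0` the integrand has
residue at infinity `-λ(y)` if `x = y` and `0` otherwise, so the kernel is the identity. Taking the
particles in the interlaced order `x₁, y₁, x₂, y₂, …`, interlacing makes the rest of the row or the
rest of the column of each particle vanish, so the determinant is the product of the diagonal.
Finally, `y_i = y_j` makes two rows equal.
-/

section Determinant

variable {n : Type*} [Fintype n] [DecidableEq n]

theorem hasDerivAt_det {𝕜 A : Type*} [NontriviallyNormedField 𝕜] [NormedCommRing A]
    [NormedAlgebra 𝕜 A] {M : 𝕜 → Matrix n n A} {M' : Matrix n n A} {t : 𝕜}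
    (h : ∀ i j, HasDerivAt (fun τ => M τ i j) (M' i j) t) :
    HasDerivAt (fun τ => (M τ).det) (∑ i, ((M t).updateRow i (M' i)).det) t := by
  have det_expand (B : Matrix n n A) :
      B.det = ∑ σ : Equiv.Perm n, ((Equiv.Perm.sign σ : ℤ) : A) * ∏ i, B i (σ i) := by
    rw [← Matrix.det_transpose, Matrix.det_apply']
    rfl
  have leibniz_summand (σ : Equiv.Perm n) (i : n) :
      (∏ j ∈ univ.erase i, M t j (σ j)) * M' i (σ i) =
        ∏ j, (M t).updateRow i (M' i) j (σ j) := by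
    rw [← mul_prod_erase _ _ (mem_univ i), Matrix.updateRow_self, mul_comm]
    congr 1
    exact prod_congr rfl fun j hj => by rw [Matrix.updateRow_ne (ne_of_mem_erase hj)]
  have deriv_expand := HasDerivAt.fun_sum fun (σ : Equiv.Perm n) (_ : σ ∈ univ) =>
    (HasDerivAt.fun_finsetProd fun i (_ : i ∈ univ) => h i (σ i)).const_mul
      ((Equiv.Perm.sign σ : ℤ) : A)
  simp only [smul_eq_mul, leibniz_summand, mul_sum] at deriv_expand
  rw [sum_comm] at deriv_expand
  simpa only [det_expand] using deriv_expand

theorem hasDerivAt_det_of_row_jumps {𝕜 A S : Type*} [NontriviallyNormedField 𝕜]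
    [NormedCommRing A] [NormedAlgebra 𝕜 A] {row : 𝕜 → n → S → n → A} {rate : n → A} {v w : n → S}
    {t : 𝕜} (h : ∀ r c, HasDerivAt (fun τ => row τ r (v r) c)
      (rate r * (row t r (w r) c - row t r (v r) c)) t) :
    HasDerivAt (fun τ => (Matrix.of fun r => row τ r (v r)).det)
      (∑ r, rate r * ((Matrix.of fun q => row t q (Function.update v r (w r) q)).det -
        (Matrix.of fun q => row t q (v q)).det)) t := by
  set M : Matrix n n A := Matrix.of fun q => row t q (v q) with hM
  have updateRow_jump (r : n) : (Matrix.of fun q => row t q (Function.update v r (w r) q)) =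
      M.updateRow r (row t r (w r)) := by
    ext q c
    obtain rfl | hq := eq_or_ne q r
    · simp
    · simp [hM, hq]
  have det_updateRow_sub (r : n) : (M.updateRow r (row t r (w r) - row t r (v r))).det =
      (M.updateRow r (row t r (w r))).det - (M.updateRow r (row t r (v r))).det :=
    Matrix.detRowAlternating.map_update_sub M r _ _
  have updateRow_stay (r : n) : M.updateRow r (row t r (v r)) = M := M.updateRow_eq_self r
  refine (hasDerivAt_det (M := fun τ => Matrix.of fun r => row τ r (v r))
    (M' := fun r => rate r • (row t r (w r) - row t r (v r))) h).congr_deriv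
    (sum_congr rfl fun r _ => ?_)
  rw [← hM, updateRow_jump, Matrix.det_updateRow_smul, det_updateRow_sub, updateRow_stay]

/-- Only the identity contributes to the Leibniz expansion: by induction along `b`, a contributing
permutation fixes every index of smaller rank, and row or column `i` then forces it to fix `i`. -/
theorem det_eq_prod_diag_of_row_or_col {A α : Type*} [CommRing A] [LinearOrder α]
    {M : Matrix n n A} {b : n → α} (hb : Function.Injective b)
    (h : ∀ i, (∀ j, b i < b j → M i j = 0) ∨ (∀ j, b i < b j → M j i = 0)) :
    M.det = ∏ i, M i i := by
  have perm_eq_one (σ : Equiv.Perm n) (hσ : ∀ i, M (σ i) i ≠ 0) : σ = 1 := by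
    refine Equiv.ext fun i => ?_
    have wf : WellFounded fun i j => b i < b j :=
      @Finite.wellFounded_of_trans_of_irrefl n _ _ ⟨fun _ _ _ => lt_trans⟩ ⟨fun _ => lt_irrefl _⟩
    induction i using wf.induction with
    | _ i ih =>
      by_contra hne
      have hne_symm : σ.symm i ≠ i := fun hi => hne (σ.symm_apply_eq.1 hi).symm
      rcases h i with hrow | hcol
      · refine hσ (σ.symm i) ?_
        rw [σ.apply_symm_apply]
        refine hrow _ ((hb.ne hne_symm).lt_or_gt.resolve_left fun hlt => hne_symm ?_)
        simpa using (ih _ hlt).symm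
      · exact hσ i (hcol _ ((hb.ne hne).lt_or_gt.resolve_left fun hlt =>
          hne (σ.injective (ih _ hlt))))
  rw [Matrix.det_apply', sum_eq_single 1]
  · simp
  · intro σ _ hσ
    obtain ⟨i, hi⟩ : ∃ i, M (σ i) i = 0 := by
      by_contra! hall
      exact hσ (perm_eq_one σ hall)
    exact mul_eq_zero_of_right _ (prod_eq_zero (mem_univ i) hi)
  · simp

end Determinant

section CircleIntegral

open Bornology Filter Metric Topology

variable {E : Type*} [NormedAddCommGroup E] [NormedSpace ℂ E]

theorem hasDerivAt_circleIntegral {𝕜 : Type*} [RCLike 𝕜] [NormedSpace 𝕜 E] [SMulCommClass 𝕜 ℂ E]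
    {F F' : 𝕜 → ℂ → E} {c : ℂ} {R : ℝ} (t : 𝕜)
    (hF : ∀ τ, ContinuousOn (F τ) (sphere c |R|))
    (hF' : ContinuousOn (Function.uncurry F') (Set.univ ×ˢ sphere c |R|))
    (hderiv : ∀ τ, ∀ z ∈ sphere c |R|, HasDerivAt (fun τ => F τ z) (F' τ z) τ) :
    HasDerivAt (fun τ => ∮ z in C(c, R), F τ z) (∮ z in C(c, R), F' t z) t := by
  have hK : IsCompact (closedBall t 1 ×ˢ sphere c |R|) :=
    (isCompact_closedBall t 1).prod (isCompact_sphere c |R|)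
  obtain ⟨B, hB⟩ := hK.exists_bound_of_continuousOn
    (hF'.mono (Set.prod_mono_left (Set.subset_univ _)))
  have hmem (θ : ℝ) : circleMap c R θ ∈ sphere c |R| := circleMap_mem_sphere' c R θ
  have integrand_continuous {g : ℂ → E} (hg : ContinuousOn g (sphere c |R|)) :
      Continuous fun θ => deriv (circleMap c R) θ • g (circleMap c R θ) := by
    simp only [deriv_circleMap]
    exact ((continuous_circleMap 0 R).mul continuous_const).smul
      (hg.comp_continuous (continuous_circleMap c R) hmem)
  have hF't : ContinuousOn (F' t) (sphere c |R|) :=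
    hF'.comp (by fun_prop : ContinuousOn (fun z => (t, z)) _) fun z hz => ⟨Set.mem_univ _, hz⟩
  refine (intervalIntegral.hasDerivAt_integral_of_dominated_loc_of_deriv_le
    (F' := fun τ θ => deriv (circleMap c R) θ • F' τ (circleMap c R θ))
    (bound := fun _ => |R| * B) (closedBall_mem_nhds t one_pos)
    (.of_forall fun τ => (integrand_continuous (hF τ)).aestronglyMeasurable)
    ((integrand_continuous (hF t)).intervalIntegrable _ _)
    (integrand_continuous hF't).aestronglyMeasurable
    (.of_forall fun θ _ τ hτ => ?_) intervalIntegrable_const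
    (.of_forall fun θ _ τ _ => (hderiv τ _ (hmem θ)).const_smul _)).2
  rw [norm_smul, deriv_circleMap, norm_mul, norm_circleMap_zero, norm_I, mul_one]
  gcongr
  exact hB (τ, circleMap c R θ) ⟨hτ, hmem θ⟩

theorem circleIntegral_inv_smul_smul_sub [CompleteSpace E] {f : ℂ → E} {c : ℂ} {r : ℝ} (hr : 0 < r)
    (hf : ContinuousOn f (sphere c r)) (L : E) :
    (∮ z in C(c, r), (z - c)⁻¹ • ((z - c) • f z - L)) =
      (∮ z in C(c, r), f z) - (2 * π * I : ℂ) • L := by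
  have hinv : ContinuousOn (fun z => (z - c)⁻¹) (sphere c r) :=
    ContinuousOn.inv₀ (by fun_prop) fun z hz => sub_ne_zero.2 (ne_of_mem_sphere hz hr.ne')
  have integrable_left : CircleIntegrable (fun z => (z - c)⁻¹ • (z - c) • f z) c r :=
    (hinv.smul (.smul (by fun_prop) hf)).circleIntegrable hr.le
  have integrable_right : CircleIntegrable (fun z => (z - c)⁻¹ • L) c r :=
    (hinv.smul continuousOn_const).circleIntegrable hr.le
  simp only [smul_sub]
  rw [circleIntegral.integral_sub integrable_left integrable_right,
    circleIntegral.integral_sub_inv_smul_sub_smul, circleIntegral.integral_smul_const,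
    circleIntegral.integral_sub_center_inv c hr.ne']

/-- The residue at infinity: the contour can be pushed to a circle of arbitrarily large radius, on
which `f z` is close to `L / (z - c)`. -/
theorem two_pi_I_inv_smul_circleIntegral_of_tendsto_cobounded [CompleteSpace E] {f : ℂ → E} {c : ℂ}
    {R : ℝ} {L : E} (hR : 0 < R) (hc : ContinuousOn f (ball c R)ᶜ)
    (hd : DifferentiableOn ℂ f (closedBall c R)ᶜ)
    (hL : Tendsto (fun z => (z - c) • f z) (cobounded ℂ) (𝓝 L)) :
    (2 * π * I : ℂ)⁻¹ • (∮ z in C(c, R), f z) = L := by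
  refine eq_of_forall_dist_le fun ε hε => ?_
  obtain ⟨r₀, -, hr₀⟩ := (hasBasis_cobounded_compl_closedBall c).mem_iff.1
    (hL.eventually (closedBall_mem_nhds L hε))
  obtain ⟨r, hRr, hr₀r⟩ : ∃ r, R ≤ r ∧ r₀ < r :=
    ⟨max R (r₀ + 1), le_max_left _ _, (lt_add_one r₀).trans_le (le_max_right _ _)⟩
  have hr : 0 < r := hR.trans_le hRr
  have deform : (∮ z in C(c, r), f z) = ∮ z in C(c, R), f z :=
    circleIntegral_eq_of_differentiable_on_annulus_off_countable hR hRr Set.countable_empty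
      (hc.mono fun z hz => hz.2) fun z hz =>
        hd.differentiableAt (isClosed_closedBall.isOpen_compl.mem_nhds hz.1.2)
  have hfr : ContinuousOn f (sphere c r) := hc.mono fun z hz => by
    rwa [Set.mem_compl_iff, mem_ball, mem_sphere.1 hz, not_lt]
  have close_on_circle (z : ℂ) (hz : z ∈ sphere c r) :
      ‖(z - c)⁻¹ • ((z - c) • f z - L)‖ ≤ r⁻¹ * ε := by
    have hfar : z ∈ (closedBall c r₀)ᶜ := by
      rwa [Set.mem_compl_iff, mem_closedBall, mem_sphere.1 hz, not_le]
    rw [norm_smul, norm_inv, ← dist_eq_norm, mem_sphere.1 hz]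
    gcongr
    exact mem_closedBall_iff_norm.1 (hr₀ hfar)
  calc dist ((2 * π * I : ℂ)⁻¹ • ∮ z in C(c, R), f z) L
      = ‖(2 * π * I : ℂ)⁻¹ • ∮ z in C(c, r), (z - c)⁻¹ • ((z - c) • f z - L)‖ := by
        rw [circleIntegral_inv_smul_smul_sub hr hfr, deform, smul_sub,
          inv_smul_smul₀ two_pi_I_ne_zero, dist_eq_norm]
    _ ≤ r * (r⁻¹ * ε) :=
        circleIntegral.norm_two_pi_i_inv_smul_integral_le_of_norm_le_const hr.le close_on_circle
    _ = ε := mul_inv_cancel_left₀ hr.ne' ε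

end CircleIntegral

section Semigroup

open Bornology Filter Metric Topology

variable {lam : ℕ → ℝ} {R : ℝ}

theorem pF_succ (x : ℕ) (w : ℂ) :
    pF lam (x + 1) w = pF lam x w * ((lam x - w) / lam x) :=
  prod_range_succ _ _

theorem psiF_eq_inv_pF_succ (y : ℕ) (w : ℂ) : psiF lam y w = (pF lam (y + 1) w)⁻¹ := by
  simp only [psiF, pF, ← prod_inv_distrib, inv_div]

theorem differentiable_pF (x : ℕ) : Differentiable ℂ (pF lam x) := by
  unfold pF
  fun_prop

theorem pF_ne_zero {x : ℕ} {w : ℂ} (h0 : ∀ k < x, lam k ≠ 0) (hw : ∀ k < x, w ≠ lam k) :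
    pF lam x w ≠ 0 := by
  refine prod_ne_zero_iff.2 fun k hk => ?_
  have hk := mem_range.1 hk
  exact div_ne_zero (sub_ne_zero.2 (hw k hk).symm) (ofReal_ne_zero.2 (h0 k hk))

/-- `x ↦ p_x(w)` is an eigenfunction of the generator `L f(x) = λ(x) (f(x + 1) - f(x))`, with
eigenvalue `-w`. -/
theorem rate_mul_pF_succ_sub {x : ℕ} (h0 : lam x ≠ 0) (w : ℂ) :
    lam x * (pF lam (x + 1) w - pF lam x w) = -w * pF lam x w := by
  have : (lam x : ℂ) ≠ 0 := ofReal_ne_zero.2 h0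
  rw [pF_succ]
  field_simp
  ring

theorem differentiableAt_psiF_mul_pF (h0 : ∀ k, lam k ≠ 0) (hR : ∀ k, |lam k| < R) (x y : ℕ)
    {w : ℂ} (hw : R ≤ ‖w‖) : DifferentiableAt ℂ (fun w => psiF lam y w * pF lam x w) w := by
  have hne (k : ℕ) : w ≠ lam k := by
    rintro rfl
    exact (hR k).not_ge (by simpa using hw)
  simp only [psiF_eq_inv_pF_succ]
  exact ((differentiable_pF _ w).fun_inv (pF_ne_zero (fun k _ => h0 k) fun k _ => hne k)).mul
    (differentiable_pF x w)

theorem hasDerivAt_eL (h0 : ∀ k, lam k ≠ 0) (hR : ∀ k, |lam k| < R) (t : ℝ) (x y : ℕ) :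
    HasDerivAt (fun τ => eL lam R τ x y)
      (lam x * (eL lam R t (x + 1) y - eL lam R t x y)) t := by
  have hR0 : 0 < R := (abs_nonneg _).trans_lt (hR 0)
  have hcont (x : ℕ) : ContinuousOn (fun w => psiF lam y w * pF lam x w) (sphere 0 R) := fun w hw =>
    (differentiableAt_psiF_mul_pF h0 hR x y
      (mem_sphere_zero_iff_norm.1 hw).ge).continuousAt.continuousWithinAt
  have hint (x : ℕ) : CircleIntegrable
      (fun w => psiF lam y w * pF lam x w * exp (-(t : ℂ) * w)) 0 R :=
    ((hcont x).mul (by fun_prop)).circleIntegrable hR0.le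
  have deriv_integral : HasDerivAt
      (fun τ : ℝ => ∮ w in C(0, R), psiF lam y w * pF lam x w * exp (-(τ : ℂ) * w))
      (∮ w in C(0, R), psiF lam y w * pF lam x w * (exp (-(t : ℂ) * w) * (-w))) t := by
    refine hasDerivAt_circleIntegral (𝕜 := ℝ)
      (F' := fun τ w => psiF lam y w * pF lam x w * (exp (-(τ : ℂ) * w) * (-w))) t ?_ ?_ ?_
    all_goals rw [abs_of_pos hR0]
    · exact fun τ => (hcont x).mul (by fun_prop)
    · exact ((hcont x).comp continuousOn_snd fun p hp => hp.2).mul (by fun_prop)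
    · intro τ w _
      have hexp : HasDerivAt (fun τ : ℝ => -(τ : ℂ) * w) (-1 * w) τ :=
        ofRealCLM.hasDerivAt.neg.mul_const w
      simpa using hexp.cexp.const_mul (psiF lam y w * pF lam x w)
  have generator_integral :
      (∮ w in C(0, R), psiF lam y w * pF lam x w * (exp (-(t : ℂ) * w) * (-w))) =
        lam x * ((∮ w in C(0, R), psiF lam y w * pF lam (x + 1) w * exp (-(t : ℂ) * w)) -
          ∮ w in C(0, R), psiF lam y w * pF lam x w * exp (-(t : ℂ) * w)) := by
    rw [← circleIntegral.integral_sub (hint _) (hint _), ← circleIntegral.integral_const_mul]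
    congr 1 with w
    linear_combination (-psiF lam y w * exp (-(t : ℂ) * w)) * rate_mul_pF_succ_sub (h0 x) w
  refine ((deriv_integral.const_mul _).const_mul _).congr_deriv ?_
  rw [generator_integral]
  unfold eL
  ring

theorem tendsto_const_div_const_sub_cobounded {𝕜 : Type*} [NormedField 𝕜] (a : 𝕜) :
    Tendsto (fun w => a / (a - w)) (cobounded 𝕜) (𝓝 0) := by
  have hsub : Tendsto (fun w => a - w) (cobounded 𝕜) (cobounded 𝕜) :=
    tendsto_const_sub_cobounded a
  simpa [div_eq_mul_inv] using (tendsto_inv₀_cobounded.comp hsub).const_mul a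

/-- The residue at infinity of `ψ_y p_x`: only for `x = y` is there a single resolvent factor. -/
theorem tendsto_mul_psiF_mul_pF_cobounded (h0 : ∀ k, lam k ≠ 0) {x y : ℕ} (hxy : x ≤ y) :
    Tendsto (fun w => w * (psiF lam y w * pF lam x w)) (cobounded ℂ)
      (𝓝 (if x = y then -(lam y : ℂ) else 0)) := by
  induction y, hxy using Nat.le_induction with
  | base =>
    have hlim := ((tendsto_const_div_const_sub_cobounded (lam x : ℂ)).const_mul
      (lam x : ℂ)).sub_const (lam x : ℂ)
    rw [mul_zero, zero_sub] at hlim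
    rw [if_pos rfl]
    refine hlim.congr' ?_
    have hne : ∀ᶠ w in cobounded ℂ, ∀ k ∈ range (x + 1), w ≠ (lam k : ℂ) :=
      (eventually_all_finset _).2 fun k _ => eventually_ne_cobounded _
    filter_upwards [hne] with w hw
    have hpF : pF lam x w ≠ 0 := pF_ne_zero (fun k _ => h0 k) fun k hk => hw k (by simp; omega)
    have hx : (lam x : ℂ) ≠ 0 := ofReal_ne_zero.2 (h0 x)
    have hxw : (lam x : ℂ) - w ≠ 0 := sub_ne_zero.2 (hw x (by simp)).symm
    rw [psiF_eq_inv_pF_succ, pF_succ]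
    field_simp
    ring
  | succ y hxy ih =>
    have hlim := ih.mul (tendsto_const_div_const_sub_cobounded (lam (y + 1) : ℂ))
    rw [mul_zero] at hlim
    rw [if_neg (by omega)]
    refine hlim.congr fun w => ?_
    rw [psiF, psiF, prod_range_succ _ (y + 1)]
    ring

theorem psiF_mul_pF_eq_prod_Ico_of_lt {x y : ℕ} (hyx : y < x) {w : ℂ} (h0 : ∀ k, lam k ≠ 0)
    (hw : ∀ k, w ≠ lam k) :
    psiF lam y w * pF lam x w = ∏ k ∈ Ico (y + 1) x, ((lam k - w) / lam k) := by
  have hpF : pF lam (y + 1) w ≠ 0 := pF_ne_zero (fun k _ => h0 k) fun k _ => hw k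
  have split : pF lam x w = pF lam (y + 1) w * ∏ k ∈ Ico (y + 1) x, ((lam k - w) / lam k) :=
    (prod_range_mul_prod_Ico _ hyx).symm
  rw [psiF_eq_inv_pF_succ, split, inv_mul_cancel_left₀ hpF]

theorem eL_zero (h0 : ∀ k, lam k ≠ 0) (hR : ∀ k, |lam k| < R) (x y : ℕ) :
    eL lam R 0 x y = (1 : Matrix ℕ ℕ ℂ) x y := by
  have hR0 : 0 < R := (abs_nonneg _).trans_lt (hR 0)
  have hdiff {w : ℂ} (hw : R ≤ ‖w‖) :
      DifferentiableAt ℂ (fun w => psiF lam y w * pF lam x w) w :=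
    differentiableAt_psiF_mul_pF h0 hR x y hw
  have hy : (lam y : ℂ) ≠ 0 := ofReal_ne_zero.2 (h0 y)
  simp only [eL, ofReal_zero, neg_zero, zero_mul, exp_zero, mul_one]
  rcases le_or_gt x y with hxy | hyx
  · have hcont : ContinuousOn (fun w => psiF lam y w * pF lam x w) (ball 0 R)ᶜ := fun w hw =>
      (hdiff (by simpa using hw)).continuousAt.continuousWithinAt
    have hdiffOn : DifferentiableOn ℂ (fun w => psiF lam y w * pF lam x w) (closedBall 0 R)ᶜ :=
      fun w hw => (hdiff (le_of_not_ge fun h => hw (by simpa using h))).differentiableWithinAt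
    have residue := two_pi_I_inv_smul_circleIntegral_of_tendsto_cobounded hR0 hcont hdiffOn
      (by simpa only [sub_zero, smul_eq_mul] using tendsto_mul_psiF_mul_pF_cobounded h0 hxy)
    rw [← smul_eq_mul (2 * π * I : ℂ)⁻¹, residue, Matrix.one_apply]
    split_ifs <;> simp [hy]
  · have entire : Differentiable ℂ fun w => ∏ k ∈ Ico (y + 1) x, ((lam k - w) / (lam k : ℂ)) := by
      fun_prop
    rw [circleIntegral.integral_congr hR0.le fun w hw =>
        psiF_mul_pF_eq_prod_Ico_of_lt hyx h0 fun k hk => (hR k).ne ?_,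
      entire.diffContOnCl.circleIntegral_eq_zero hR0.le, Matrix.one_apply_ne hyx.ne']
    · simp
    · rw [← mem_sphere_zero_iff_norm.1 hw, hk]
      simp

end Semigroup

section Interlace

variable {N : ℕ} {y : Fin N → ℕ} {x : Fin (N + 1) → ℕ}

theorem Interlace.strictMono (h : Interlace y x) : StrictMono x :=
  Fin.strictMono_iff_lt_succ.2 fun i => (h i).1.trans_lt (h i).2

theorem Interlace.le (h : Interlace y x) {i : Fin (N + 1)} {j : Fin N} (hij : i ≤ j.castSucc) :
    x i ≤ y j :=
  (h.strictMono.monotone hij).trans (h j).1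

theorem Interlace.lt (h : Interlace y x) {i : Fin (N + 1)} {j : Fin N} (hji : j.succ ≤ i) :
    y j < x i :=
  (h j).2.trans_le (h.strictMono.monotone hji)

theorem Interlace.strictMono_left (h : Interlace y x) : StrictMono y := fun _ j hij =>
  (h.lt (i := j.castSucc) hij).trans_le (h j).1

end Interlace

section TwoLevel

variable {N : ℕ} {K : Type*} [Field K]

/-- The position of a label in the interlaced order `x₁, y₁, x₂, y₂, …, y_N, x_{N+1}`, where
`Sum.inl` labels the `x` particles and `Sum.inr` the `y` particles. -/
def interlacedRank : Fin (N + 1) ⊕ Fin N → ℕ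
  | Sum.inl i => 2 * i
  | Sum.inr i => 2 * i + 1

theorem interlacedRank_injective :
    Function.Injective (interlacedRank : Fin (N + 1) ⊕ Fin N → ℕ) := by
  rintro (i | i) (j | j) h <;> grind [interlacedRank]

/-- The row with label `r` of the two-level block matrix built from a one-particle kernel `P`, as a
function of the position `s` of the particle carrying that label. Only the label, and not the
position, enters the indicator in the upper right block. -/
def twoLevelRow (rate : ℕ → K) (P : Matrix ℕ ℕ K) (y' : Fin N → ℕ) (x' : Fin (N + 1) → ℕ)
    (r : Fin (N + 1) ⊕ Fin N) (s : ℕ) (c : Fin (N + 1) ⊕ Fin N) : K :=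
  match r, c with
  | Sum.inl _, Sum.inl j => P s (x' j)
  | Sum.inl i, Sum.inr j =>
      1 / rate (y' j) * (∑ z ∈ range (y' j + 1), P s z - if (i : ℕ) ≤ j then 1 else 0)
  | Sum.inr _, Sum.inl j => rate s * (P s (x' j) - P (s + 1) (x' j))
  | Sum.inr _, Sum.inr j => P s (y' j)

theorem hasDerivAt_twoLevelRow {𝕜 K : Type*} [NontriviallyNormedField 𝕜] [NormedField K]
    [NormedAlgebra 𝕜 K] {rate : ℕ → K} {P : 𝕜 → Matrix ℕ ℕ K} {t : 𝕜}
    (hP : ∀ s z, HasDerivAt (fun τ => P τ s z) (rate s * (P t (s + 1) z - P t s z)) t)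
    (y' : Fin N → ℕ) (x' : Fin (N + 1) → ℕ) (r : Fin (N + 1) ⊕ Fin N) (s : ℕ)
    (c : Fin (N + 1) ⊕ Fin N) :
    HasDerivAt (fun τ => twoLevelRow rate (P τ) y' x' r s c)
      (rate s * (twoLevelRow rate (P t) y' x' r (s + 1) c - twoLevelRow rate (P t) y' x' r s c))
      t := by
  rcases r with i | i <;> rcases c with j | j <;> simp only [twoLevelRow]
  · exact hP s (x' j)
  · refine (((HasDerivAt.fun_sum fun z (_ : z ∈ range (y' j + 1)) => hP s z).sub_const
      (if (i : ℕ) ≤ j then (1 : K) else 0)).const_mul (1 / rate (y' j))).congr_deriv ?_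
    rw [← mul_sum, sum_sub_distrib]
    ring
  · refine (((hP s (x' j)).sub (hP (s + 1) (x' j))).const_mul (rate s)).congr_deriv ?_
    ring
  · exact hP s (y' j)

theorem sum_range_matrix_one_apply {K : Type*} [AddCommMonoidWithOne K] {s m : ℕ} :
    ∑ z ∈ range m, (1 : Matrix ℕ ℕ K) s z = if s < m then 1 else 0 := by
  simp [Matrix.one_apply]

/-- If the particle of label `r` is to the left of its target, then it is to the left of all later
targets, and the rest of its row vanishes; if it is to the right of its target, then so are all
later particles, and the rest of its column vanishes. -/
theorem twoLevelRow_one_row_or_col (rate : ℕ → K) {y y' : Fin N → ℕ} {x x' : Fin (N + 1) → ℕ}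
    (h : Interlace y x) (h' : Interlace y' x') (r : Fin (N + 1) ⊕ Fin N) :
    (∀ c, interlacedRank r < interlacedRank c →
      twoLevelRow rate 1 y' x' r (Sum.elim x y r) c = 0) ∨
    (∀ c, interlacedRank r < interlacedRank c →
      twoLevelRow rate 1 y' x' c (Sum.elim x y c) r = 0) := by
  rcases r with i | i
  · rcases le_or_gt (x i) (x' i) with hle | hlt
    · refine .inl fun c hic => ?_
      rcases c with j | j
      · have hij : i < j := by grind [interlacedRank]
        exact Matrix.one_apply_ne (hle.trans_lt (h'.strictMono hij)).ne
      · have hij : i ≤ j.castSucc := by grind [interlacedRank]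
        have behind : x i < y' j + 1 := Nat.lt_succ_of_le (hle.trans (h'.le hij))
        simp [twoLevelRow, sum_range_matrix_one_apply, behind, show (i : ℕ) ≤ j from hij]
    · refine .inr fun c hic => ?_
      rcases c with j | j
      · have hij : i < j := by grind [interlacedRank]
        exact Matrix.one_apply_ne (hlt.trans (h.strictMono hij)).ne'
      · have hij : i ≤ j.castSucc := by grind [interlacedRank]
        have passed : x' i < y j := hlt.trans_le (h.le hij)
        simp [twoLevelRow, Matrix.one_apply, passed.ne', (passed.trans (Nat.lt_succ_self _)).ne']
  · rcases lt_or_ge (y i) (y' i) with hlt | hle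
    · refine .inl fun c hic => ?_
      rcases c with j | j
      · have hij : i.succ ≤ j := by grind [interlacedRank]
        have behind : y i + 1 < x' j := (Nat.succ_le_of_lt hlt).trans_lt (h'.lt hij)
        simp [twoLevelRow, Matrix.one_apply, behind.ne, ((Nat.lt_succ_self _).trans behind).ne]
      · have hij : i < j := by grind [interlacedRank]
        exact Matrix.one_apply_ne (hlt.trans (h'.strictMono_left hij)).ne
    · refine .inr fun c hic => ?_
      rcases c with j | j
      · have hij : i.succ ≤ j := by grind [interlacedRank]
        have passed : y' i + 1 ≤ x j := Nat.succ_le_of_lt (hle.trans_lt (h.lt hij))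
        have hji : ¬ (j : ℕ) ≤ i := not_le.2 hij
        simp [twoLevelRow, sum_range_matrix_one_apply, passed.not_gt, hji]
      · have hij : i < j := by grind [interlacedRank]
        exact Matrix.one_apply_ne (hle.trans_lt (h.strictMono_left hij)).ne'

theorem twoLevelRow_one_self (rate : ℕ → K) {y y' : Fin N → ℕ} {x x' : Fin (N + 1) → ℕ}
    (r : Fin (N + 1) ⊕ Fin N) :
    twoLevelRow rate 1 y' x' r (Sum.elim x y r) r =
      if Sum.elim x y r = Sum.elim x' y' r then 1 else 0 := by
  rcases r with i | i <;> exact Matrix.one_apply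

theorem det_twoLevelRow_one (rate : ℕ → K) {y y' : Fin N → ℕ} {x x' : Fin (N + 1) → ℕ}
    (h : Interlace y x) (h' : Interlace y' x') :
    (Matrix.of fun r => twoLevelRow rate 1 y' x' r (Sum.elim x y r)).det =
      if y = y' ∧ x = x' then 1 else 0 := by
  rw [det_eq_prod_diag_of_row_or_col
    (M := Matrix.of fun r => twoLevelRow rate 1 y' x' r (Sum.elim x y r)) interlacedRank_injective
    (twoLevelRow_one_row_or_col rate h h')]
  simp only [Matrix.of_apply, twoLevelRow_one_self, prod_ite_zero, prod_const_one]
  congr 1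
  simp [funext_iff, and_comm]

variable {lam : ℕ → ℝ} {R t : ℝ}

theorem Ut_eq_det_twoLevelRow (y : Fin N → ℕ) (x : Fin (N + 1) → ℕ) (y' : Fin N → ℕ)
    (x' : Fin (N + 1) → ℕ) : Ut lam R t N y x y' x' =
      (Matrix.of fun r => twoLevelRow (fun k => (lam k : ℂ)) (eL lam R t) y' x' r
        (Sum.elim x y r)).det := by
  unfold Ut
  congr 1
  ext (i | i) (j | j) <;> rfl

theorem Ut_zero (h0 : ∀ k, lam k ≠ 0) (hR : ∀ k, |lam k| < R) {y y' : Fin N → ℕ}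
    {x x' : Fin (N + 1) → ℕ} (h : Interlace y x) (h' : Interlace y' x') :
    Ut lam R 0 N y x y' x' = if y = y' ∧ x = x' then 1 else 0 := by
  have eL_eq_one : eL lam R 0 = (1 : Matrix ℕ ℕ ℂ) := by
    ext
    exact eL_zero h0 hR _ _
  rw [Ut_eq_det_twoLevelRow, eL_eq_one, det_twoLevelRow_one _ h h']

theorem hasDerivAt_Ut (h0 : ∀ k, lam k ≠ 0) (hR : ∀ k, |lam k| < R) (y : Fin N → ℕ)
    (x : Fin (N + 1) → ℕ) (y' : Fin N → ℕ) (x' : Fin (N + 1) → ℕ) :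
    HasDerivAt (fun τ : ℝ => Ut lam R τ N y x y' x')
      ((∑ j : Fin (N + 1), (lam (x j) : ℂ) *
          (Ut lam R t N y (Function.update x j (x j + 1)) y' x' - Ut lam R t N y x y' x')) +
       (∑ i : Fin N, (lam (y i) : ℂ) *
          (Ut lam R t N (Function.update y i (y i + 1)) x y' x' - Ut lam R t N y x y' x'))) t := by
  have key := hasDerivAt_det_of_row_jumps (v := Sum.elim x y) fun r c =>
    hasDerivAt_twoLevelRow (hasDerivAt_eL h0 hR t) y' x' r (Sum.elim x y r) c
  simpa only [Ut_eq_det_twoLevelRow, Fintype.sum_sum_type, Sum.elim_inl, Sum.elim_inr,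
    Sum.update_elim_inl, Sum.update_elim_inr] using key

theorem Ut_eq_zero_of_eq {y : Fin N → ℕ} {i j : Fin N} (hij : i ≠ j) (hy : y i = y j)
    (x : Fin (N + 1) → ℕ) (y' : Fin N → ℕ) (x' : Fin (N + 1) → ℕ) :
    Ut lam R t N y x y' x' = 0 := by
  rw [Ut_eq_det_twoLevelRow]
  refine Matrix.det_zero_of_row_eq (Sum.inr_injective.ne hij) (funext fun c => ?_)
  rcases c with c | c <;> simp only [Matrix.of_apply, twoLevelRow, Sum.elim_inr, hy]

end TwoLevel

theorem stmt_7_general {lam : ℕ → ℝ} {R : ℝ} (h0 : ∀ k, lam k ≠ 0) (hR : ∀ k, |lam k| < R) {N : ℕ}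
    (y' : Fin N → ℕ) (x' : Fin (N + 1) → ℕ) :
    (Interlace y' x' → ∀ (y : Fin N → ℕ) (x : Fin (N + 1) → ℕ), Interlace y x →
        Ut lam R 0 N y x y' x' = if y = y' ∧ x = x' then 1 else 0) ∧
    (∀ (y : Fin N → ℕ) (x : Fin (N + 1) → ℕ) (t : ℝ),
        HasDerivAt (fun τ : ℝ => Ut lam R τ N y x y' x')
          ((∑ j : Fin (N + 1), (lam (x j) : ℂ) *
              (Ut lam R t N y (Function.update x j (x j + 1)) y' x' - Ut lam R t N y x y' x')) +
           (∑ i : Fin N, (lam (y i) : ℂ) *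
              (Ut lam R t N (Function.update y i (y i + 1)) x y' x' - Ut lam R t N y x y' x')))
          t) ∧
    (∀ (y : Fin N → ℕ) (x : Fin (N + 1) → ℕ) (i j : Fin N), i ≠ j → y i = y j →
        ∀ t : ℝ, Ut lam R t N y x y' x' = 0) :=
  ⟨fun h' _ _ h => Ut_zero h0 hR h h', fun y x _ => hasDerivAt_Ut h0 hR y x y' x',
    fun _ x _ _ hij hy _ => Ut_eq_zero_of_eq hij hy x y' x'⟩

/-- fix (y',x') ∈ W^{N,N+1}. Then (i) U_0 = δ_{(y',x')};
(ii) for (y,x) in the interior of W^{N,N+1}, t ↦ U_t[(y,x),(y',x')] is differentiable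
on [0,∞) and satisfies the Kolmogorov backward equation; (iii) U_t vanishes when two
y-coordinates coincide. -/
theorem stmt_7 (lam : ℕ → ℝ) (s M : ℝ) (hs : 0 < s)
    (hlb : ∀ x, s ≤ lam x) (hub : ∀ x, lam x ≤ M)
    (R : ℝ) (hR : M < R) (N : ℕ) (hN : 1 ≤ N)
    (y' : Fin N → ℕ) (x' : Fin (N + 1) → ℕ) (hy'x' : Interlace y' x') :
    (∀ (y : Fin N → ℕ) (x : Fin (N + 1) → ℕ), Interlace y x →
        Ut lam R 0 N y x y' x' = if y = y' ∧ x = x' then 1 else 0) ∧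
    (∀ (y : Fin N → ℕ) (x : Fin (N + 1) → ℕ), Interlace y x →
        (∀ i : Fin N, Interlace (Function.update y i (y i + 1)) x) →
        (∀ j : Fin (N + 1), Interlace y (Function.update x j (x j + 1))) →
        ∀ t : ℝ, 0 ≤ t →
          HasDerivWithinAt (fun τ : ℝ => Ut lam R τ N y x y' x')
            ((∑ j : Fin (N + 1), (lam (x j) : ℂ) *
                (Ut lam R t N y (Function.update x j (x j + 1)) y' x' -
                  Ut lam R t N y x y' x')) +
             (∑ i : Fin N, (lam (y i) : ℂ) *
                (Ut lam R t N (Function.update y i (y i + 1)) x y' x' -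
                  Ut lam R t N y x y' x')))
            (Set.Ici 0) t) ∧
    (∀ (y : Fin N → ℕ) (x : Fin (N + 1) → ℕ) (i : Fin N) (hi : (i : ℕ) + 1 < N),
        y i = y ⟨(i : ℕ) + 1, hi⟩ → ∀ t : ℝ, 0 ≤ t → Ut lam R t N y x y' x' = 0) := by
  have h0 (k : ℕ) : lam k ≠ 0 := (hs.trans_le (hlb k)).ne'
  have hlamR (k : ℕ) : |lam k| < R := by
    rw [abs_of_pos (hs.trans_le (hlb k))]
    exact (hub k).trans_lt hR
  obtain ⟨initial, backward, dirichlet⟩ := stmt_7_general h0 hlamR y' x'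
  exact ⟨initial hy'x', fun y x _ _ _ t _ => (backward y x t).hasDerivWithinAt,
    fun y x i hi hy t _ => dirichlet y x i ⟨i + 1, hi⟩ (by simp [Fin.ext_iff]) hy t⟩
end
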